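/- Let n ≥ 1, let I_1,…,I_M and J_1,…,J_N be distinct nonempty subsets of [n] = {1,…,n}, and let α_1,…,α_M and β_1,…,β_N be integers ≥ 1. For each i ∈ [n+1] define the occurrence bitstring x^{(i)} ∈ {0,1}^M by x^{(i)}_l = 1 if i ∈ I_l and x^{(i)}_l = 0 otherwise (so x^{(n+1)} is the all-zero string). Suppose there exists a map f : {0,1}^M → {0,1}^N satisfying (i) the homology property: for all i ∈ [n+1] and r ∈ [N], f(x^{(i)})_r = 1 if and only if i ∈ J_r; and (ii) the contraction condition: d_α(x,x') ≥ d_β(f(x),f(x')) for all x, x' ∈ {0,1}^M. Then for every finite graph G = (V,E) with nonnegative real edge weights and pairwise disjoint boundary vertex sets X_1,…,X_{n+1} ⊆ V, the entropy inequality Σ_{l=1}^M α_l S(I_l) ≥ Σ_{r=1}^N β_r S(J_r) holds, where for nonempty K ⊆ [n], S(K) is the min-cut entropy of the region X_K = ∪_{i∈K} X_i. -/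

import Mathlib

open Finset

/-- Weighted Hamming distance on the hypercube `{0,1}^M` (bits modeled as `Bool`):
`d_γ(x,y) = Σ_i γ_i |x_i - y_i|`. -/
def hamDist {M : ℕ} (γ : Fin M → ℤ) (x y : Fin M → Bool) : ℤ :=
  ∑ i, if x i = y i then 0 else γ i

/-- The occurrence bitstring `x^{(i)} ∈ {0,1}^M` of the party `i ∈ [n+1]`:
`x^{(i)}_l = 1` iff `i ∈ I_l` (so the `(n+1)`-th bitstring, the purifier's, is all zeroes). -/
def occ {n M : ℕ} (I : Fin M → Finset (Fin n)) (i : Fin (n + 1)) : Fin M → Bool :=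
  fun l => decide (∃ j : Fin n, (j : ℕ) = (i : ℕ) ∧ j ∈ I l)

/-- Total weight of the edges of the weighted graph `w` with exactly one endpoint
in the vertex set `W`. -/
def cutWeight {V : Type} [Fintype V] [DecidableEq V] (w : V → V → ℝ) (W : Finset V) : ℝ :=
  ∑ u ∈ W, ∑ v ∈ Wᶜ, w u v

/-- Min-cut entropy `S(K)` of the region `X_K = ∪_{i∈K} X_i`: the minimum, over all
vertex sets `W` whose intersection with all the boundary vertices equals `X_K`, of the
weight of the cut defined by `W`. -/
noncomputable def graphEntropy {V : Type} [Fintype V] [DecidableEq V] (w : V → V → ℝ)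
    {n : ℕ} (X : Fin (n + 1) → Finset V) (K : Finset (Fin n)) : ℝ :=
  sInf {c : ℝ | ∃ W : Finset V,
    W ∩ (Finset.univ.biUnion X) = K.biUnion (fun i => X i.castSucc) ∧ c = cutWeight w W}

/-! A family of vertex sets `W_l` is the same as a labelling `b : V → {0,1}^M`, with
`W_l = {v | b(v)_l = 1}`. Twice the `α`-weighted sum of the cut weights of the `W_l` is the sum of
`w(u,v) d_α(b(u), b(v))` over all ordered pairs of vertices, and each `W_l` is a cut for `I_l`
precisely when `b` equals `x^{(i)}` on each `X_i`. Start from minimal cuts for the `I_l` and replace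
their labelling `b` by `f ∘ b`: by the homology property this labels cuts for the `J_r`, and by the
contraction condition no term of the sum increases. -/

/-- The weighted Hamming distance on the hypercube `{0,1}^ι`, for an arbitrary finite set of
coordinates and real weights. -/
def weightedHammingDist {ι : Type*} [Fintype ι] (γ : ι → ℝ) (x y : ι → Bool) : ℝ :=
  ∑ l, if x l = y l then 0 else γ l

theorem intCast_hamDist {M : ℕ} (γ : Fin M → ℤ) (x y : Fin M → Bool) :
    (hamDist γ x y : ℝ) = weightedHammingDist (fun l => (γ l : ℝ)) x y := by
  simp only [hamDist, weightedHammingDist, Int.cast_sum, Int.cast_ite, Int.cast_zero]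

/-- The set of vertices whose label has `l`-th bit one. Labellings of the vertices by bitstrings
encode families of vertex sets: `b v` records which members of the family contain `v`. -/
def bitRegion {V ι : Type*} [Fintype V] (b : V → ι → Bool) (l : ι) : Finset V :=
  {v | b v l = true}

theorem mem_bitRegion {V ι : Type*} [Fintype V] {b : V → ι → Bool} {l : ι} {v : V} :
    v ∈ bitRegion b l ↔ b v l = true :=
  mem_filter_univ v

theorem bitRegion_decide_mem {V ι : Type*} [Fintype V] [DecidableEq V] (W : ι → Finset V) :
    bitRegion (fun v l => decide (v ∈ W l)) = W := by
  ext l v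
  rw [mem_bitRegion, decide_eq_true_iff]

section CutWeight

variable {V : Type} [Fintype V] [DecidableEq V] {w : V → V → ℝ}

theorem cutWeight_compl (hwsymm : ∀ u v, w u v = w v u) (W : Finset V) :
    cutWeight w Wᶜ = cutWeight w W := by
  unfold cutWeight
  rw [compl_compl, sum_comm]
  simp only [hwsymm]

theorem two_mul_cutWeight (hwsymm : ∀ u v, w u v = w v u) (W : Finset V) :
    2 * cutWeight w W = ∑ u, ∑ v, if u ∈ W ↔ v ∈ W then 0 else w u v := by
  rw [two_mul]
  nth_rw 2 [← cutWeight_compl hwsymm]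
  rw [← sum_add_sum_compl W, cutWeight, cutWeight, compl_compl]
  congr 1 <;> refine sum_congr rfl fun u hu => ?_
  · simp [hu, sum_ite, filter_notMem_eq_sdiff, compl_eq_univ_sdiff]
  · simp [mem_compl.mp hu]

variable {ι κ : Type*} [Fintype ι] [Fintype κ]

theorem two_mul_sum_mul_cutWeight_bitRegion (hwsymm : ∀ u v, w u v = w v u) (γ : ι → ℝ)
    (b : V → ι → Bool) :
    2 * ∑ l, γ l * cutWeight w (bitRegion b l) =
      ∑ u, ∑ v, w u v * weightedHammingDist γ (b u) (b v) := by
  calc 2 * ∑ l, γ l * cutWeight w (bitRegion b l)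
      = ∑ l, γ l * ∑ u, ∑ v, if b u l = b v l then 0 else w u v := by
        simp only [mul_sum (a := (2 : ℝ)), mul_left_comm, two_mul_cutWeight hwsymm, mem_bitRegion,
          ← Bool.eq_iff_iff]
    _ = ∑ u, ∑ v, ∑ l, γ l * if b u l = b v l then 0 else w u v := by
        simp only [mul_sum]
        rw [sum_comm]
        exact sum_congr rfl fun u _ => sum_comm
    _ = ∑ u, ∑ v, w u v * weightedHammingDist γ (b u) (b v) := by
        simp only [weightedHammingDist, mul_sum, mul_ite, mul_zero, mul_comm]

theorem sum_mul_cutWeight_bitRegion_le (hw : ∀ u v, 0 ≤ w u v) (hwsymm : ∀ u v, w u v = w v u)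
    {α : ι → ℝ} {β : κ → ℝ} {a : V → ι → Bool} {b : V → κ → Bool}
    (hdist : ∀ u v, weightedHammingDist β (b u) (b v) ≤ weightedHammingDist α (a u) (a v)) :
    ∑ r, β r * cutWeight w (bitRegion b r) ≤ ∑ l, α l * cutWeight w (bitRegion a l) := by
  refine le_of_mul_le_mul_left ?_ (two_pos : (0 : ℝ) < 2)
  simp only [two_mul_sum_mul_cutWeight_bitRegion hwsymm]
  gcongr with u _ v _
  exacts [hw u v, hdist u v]

end CutWeight

section Cuts

/-- `W` is a cut for the region `X_K`: among all boundary vertices, it contains exactly those of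
the parties in `K`. These are the sets over which `graphEntropy` minimizes. -/
def IsCutFor {V : Type*} [DecidableEq V] {n : ℕ} (X : Fin (n + 1) → Finset V)
    (K : Finset (Fin n)) (W : Finset V) : Prop :=
  W ∩ univ.biUnion X = K.biUnion fun i => X i.castSucc

variable {V : Type*} [DecidableEq V] {n : ℕ} {X : Fin (n + 1) → Finset V} {K : Finset (Fin n)}

theorem biUnion_castSucc_subset_biUnion_univ (X : Fin (n + 1) → Finset V) (K : Finset (Fin n)) :
    (K.biUnion fun i => X i.castSucc) ⊆ univ.biUnion X :=
  biUnion_subset.mpr fun i _ => subset_biUnion_of_mem X (mem_univ i.castSucc)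

theorem mem_biUnion_castSucc_iff (hX : Pairwise (Function.onFun Disjoint X)) {i : Fin (n + 1)}
    {v : V} (hv : v ∈ X i) :
    (v ∈ K.biUnion fun j => X j.castSucc) ↔ ∃ j : Fin n, (j : ℕ) = (i : ℕ) ∧ j ∈ K := by
  have mem_iff (j : Fin n) : v ∈ X j.castSucc ↔ (j : ℕ) = (i : ℕ) := by
    refine ⟨fun hvj => ?_, fun hji => ?_⟩
    · exact congrArg Fin.val (hX.eq (not_disjoint_iff.mpr ⟨v, hvj, hv⟩))
    · rwa [show j.castSucc = i from Fin.ext hji]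
  simp only [mem_biUnion, mem_iff, and_comm]

theorem isCutFor_iff (hX : Pairwise (Function.onFun Disjoint X)) {W : Finset V} :
    IsCutFor X K W ↔
      ∀ i, ∀ v ∈ X i, (v ∈ W ↔ ∃ j : Fin n, (j : ℕ) = (i : ℕ) ∧ j ∈ K) := by
  calc IsCutFor X K W
      ↔ ∀ v ∈ univ.biUnion X, (v ∈ W ↔ v ∈ K.biUnion fun j => X j.castSucc) := by
        rw [IsCutFor, Finset.ext_iff]
        refine forall_congr' fun v => ?_
        have mem_boundary : v ∈ (K.biUnion fun j => X j.castSucc) → v ∈ univ.biUnion X :=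
          fun hv => biUnion_castSucc_subset_biUnion_univ X K hv
        rw [mem_inter]
        tauto
    _ ↔ ∀ i, ∀ v ∈ X i, (v ∈ W ↔ v ∈ K.biUnion fun j => X j.castSucc) := by
        simp only [mem_biUnion (s := univ), mem_univ, true_and, forall_exists_index]
        exact forall_comm
    _ ↔ _ := forall_congr' fun i => forall₂_congr fun v hv => by
        rw [mem_biUnion_castSucc_iff hX hv]

theorem forall_isCutFor_bitRegion_iff [Fintype V] (hX : Pairwise (Function.onFun Disjoint X))
    {M : ℕ} {I : Fin M → Finset (Fin n)} {b : V → Fin M → Bool} :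
    (∀ l, IsCutFor X (I l) (bitRegion b l)) ↔ ∀ i, ∀ v ∈ X i, b v = occ I i := by
  have label_eq_iff (i : Fin (n + 1)) (v : V) : b v = occ I i ↔
      ∀ l, b v l = true ↔ ∃ j : Fin n, (j : ℕ) = (i : ℕ) ∧ j ∈ I l :=
    funext_iff.trans <| forall_congr' fun l => by rw [Bool.eq_iff_iff, occ, decide_eq_true_iff]
  simp only [isCutFor_iff hX, mem_bitRegion, label_eq_iff]
  exact ⟨fun h i v hv l => h l i v hv, fun h l i v hv => h i v hv l⟩

end Cuts

section GraphEntropy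

variable {V : Type} [Fintype V] [DecidableEq V] {n : ℕ}

theorem finite_setOf_cutWeight (w : V → V → ℝ) (X : Fin (n + 1) → Finset V)
    (K : Finset (Fin n)) : {c : ℝ | ∃ W, IsCutFor X K W ∧ c = cutWeight w W}.Finite := by
  refine (Set.finite_range (cutWeight w)).subset ?_
  rintro _ ⟨W, _, rfl⟩
  exact Set.mem_range_self W

theorem graphEntropy_le_cutWeight (w : V → V → ℝ) {X : Fin (n + 1) → Finset V}
    {K : Finset (Fin n)} {W : Finset V} (hW : IsCutFor X K W) :
    graphEntropy w X K ≤ cutWeight w W :=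
  csInf_le (finite_setOf_cutWeight w X K).bddBelow ⟨W, hW, rfl⟩

theorem exists_isCutFor_graphEntropy_eq (w : V → V → ℝ) (X : Fin (n + 1) → Finset V)
    (K : Finset (Fin n)) : ∃ W, IsCutFor X K W ∧ graphEntropy w X K = cutWeight w W := by
  have hcut : IsCutFor X K (K.biUnion fun i => X i.castSucc) :=
    inter_eq_left.mpr (biUnion_castSucc_subset_biUnion_univ X K)
  refine Set.Nonempty.csInf_mem ?_ (finite_setOf_cutWeight w X K)
  exact ⟨_, _, hcut, rfl⟩

theorem exists_bitRegion_graphEntropy_eq {ι : Type*} (w : V → V → ℝ) (X : Fin (n + 1) → Finset V)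
    (I : ι → Finset (Fin n)) :
    ∃ b : V → ι → Bool, (∀ l, IsCutFor X (I l) (bitRegion b l)) ∧
      ∀ l, graphEntropy w X (I l) = cutWeight w (bitRegion b l) := by
  choose W hcut hmin using fun l => exists_isCutFor_graphEntropy_eq w X (I l)
  refine ⟨fun v l => decide (v ∈ W l), ?_⟩
  rw [bitRegion_decide_mem]
  exact ⟨hcut, hmin⟩

end GraphEntropy

theorem stmt_0_general {n M N : ℕ} (I : Fin M → Finset (Fin n)) (J : Fin N → Finset (Fin n))
    (α : Fin M → ℝ) (β : Fin N → ℝ) (hβ : ∀ r, 0 ≤ β r)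
    (f : (Fin M → Bool) → (Fin N → Bool)) (hhom : ∀ i, f (occ I i) = occ J i)
    (hcontr : ∀ x x', weightedHammingDist β (f x) (f x') ≤ weightedHammingDist α x x')
    (V : Type) [Fintype V] [DecidableEq V]
    (w : V → V → ℝ) (hw : ∀ u v, 0 ≤ w u v) (hwsymm : ∀ u v, w u v = w v u)
    (X : Fin (n + 1) → Finset V) (hX : Pairwise (Function.onFun Disjoint X)) :
    ∑ r, β r * graphEntropy w X (J r) ≤ ∑ l, α l * graphEntropy w X (I l) := by
  obtain ⟨b, hcut, hmin⟩ := exists_bitRegion_graphEntropy_eq w X I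
  have hboundary : ∀ i, ∀ v ∈ X i, b v = occ I i := (forall_isCutFor_bitRegion_iff hX).mp hcut
  have hcut_image : ∀ r, IsCutFor X (J r) (bitRegion (f ∘ b) r) :=
    (forall_isCutFor_bitRegion_iff hX).mpr fun i v hv => by
      rw [Function.comp_apply, hboundary i v hv, hhom]
  calc ∑ r, β r * graphEntropy w X (J r)
      ≤ ∑ r, β r * cutWeight w (bitRegion (f ∘ b) r) := by
        gcongr with r _
        exacts [hβ r, graphEntropy_le_cutWeight w (hcut_image r)]
    _ ≤ ∑ l, α l * cutWeight w (bitRegion b l) :=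
        sum_mul_cutWeight_bitRegion_le hw hwsymm fun u v => hcontr (b u) (b v)
    _ = ∑ l, α l * graphEntropy w X (I l) := by simp only [hmin]

theorem stmt_0 {n M N : ℕ} (hn : 1 ≤ n)
    (I : Fin M → Finset (Fin n)) (J : Fin N → Finset (Fin n))
    (hIne : ∀ l, (I l).Nonempty) (hJne : ∀ r, (J r).Nonempty)
    (hIinj : Function.Injective I) (hJinj : Function.Injective J)
    (hIJ : ∀ l r, I l ≠ J r)
    (α : Fin M → ℤ) (β : Fin N → ℤ) (hα : ∀ l, 1 ≤ α l) (hβ : ∀ r, 1 ≤ β r)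
    (f : (Fin M → Bool) → (Fin N → Bool))
    (hhom : ∀ (i : Fin (n + 1)) (r : Fin N),
      f (occ I i) r = true ↔ ∃ j : Fin n, (j : ℕ) = (i : ℕ) ∧ j ∈ J r)
    (hcontr : ∀ x x', hamDist β (f x) (f x') ≤ hamDist α x x')
    (V : Type) [Fintype V] [DecidableEq V]
    (w : V → V → ℝ) (hw : ∀ u v, 0 ≤ w u v) (hwsymm : ∀ u v, w u v = w v u)
    (X : Fin (n + 1) → Finset V)
    (hX : ∀ i i', i ≠ i' → Disjoint (X i) (X i')) :
    ∑ r, (β r : ℝ) * graphEntropy w X (J r) ≤ ∑ l, (α l : ℝ) * graphEntropy w X (I l) := by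
  refine stmt_0_general I J _ _ (fun r => by exact_mod_cast zero_le_one.trans (hβ r)) f
    (fun i => funext fun r => ?_) (fun x x' => ?_) V w hw hwsymm X fun i i' => hX i i'
  · exact Bool.eq_iff_iff.mpr ((hhom i r).trans decide_eq_true_iff.symm)
  · simpa only [← intCast_hamDist, Int.cast_le] using hcontr x x'
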